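/- Let k >= 0, j >= 0, m >= 1 be integers and let r_1, ..., r_m be nonnegative integers with r_1 + 2*r_2 + ... + m*r_m = m; set n = 2m + kj. Then the number of words in L_{n,k}^{m,j} with \alpha_i(L) = r_i for every i equals (m+1) times the number of k-paths in P_{n,k}^{m,j} with \alpha_i(P) = r_i for every i. (Equivalently, there is a u-segment-type-preserving bijection between L_{n,k}^{m,j} and the set of pairs (P, c) where P \in P_{n,k}^{m,j} and c is one of the m+1 down-steps of the word P d.) -/

import Mathlib

open Finset

inductive Step : Type
  | u | d | h
deriving DecidableEq

/-- Lengths of maximal blocks of letters with `wt s ≠ none`, weighted by `wt`. -/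
def runs (wt : Step → Option ℕ) : List Step → List ℕ
  | [] => []
  | s :: l =>
    match wt s, runs wt l with
    | none, r => r
    | some n, r =>
      match l with
      | [] => [n]
      | s' :: _ =>
        match wt s' with
        | none => n :: r
        | some _ =>
          match r with
          | a :: rest => (n + a) :: rest
          | [] => [n]

def uRuns : List Step → List ℕ :=
  runs (fun s => match s with | Step.u => some 1 | _ => none)

def uhRuns (k : ℕ) : List Step → List ℕ :=
  runs (fun s => match s with | Step.u => some 1 | Step.h => some k | Step.d => none)

def alpha (i : ℕ) (w : List Step) : ℕ := (uRuns w).count i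

def beta (i : ℕ) (w : List Step) : ℕ := (uRuns w).tail.count i

def IsNonneg (w : List Step) : Prop :=
  ∀ i : ℕ, (w.take i).count Step.d ≤ (w.take i).count Step.u

def pathSet (m j : ℕ) : Set (List Step) :=
  {w | w.count Step.u = m ∧ w.count Step.d = m ∧ w.count Step.h = j ∧ IsNonneg w}

/-- no horizontal step lies on the x-axis -/
def NoLowH (w : List Step) : Prop :=
  ∀ (i : ℕ) (hi : i < w.length), w[i]'hi = Step.h →
    (w.take i).count Step.u ≠ (w.take i).count Step.d

def qSet (m j : ℕ) : Set (List Step) :=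
  {w | w ∈ pathSet m j ∧ NoLowH w}

/-- normalized partial Bell polynomial (r!/m!) B_{m,r}(1!t₁,2!t₂,…) -/
def bellNorm (m r : ℕ) (t : ℕ → ℚ) : ℚ :=
  ∑ f : Fin m → Fin (m + 1),
    if (∑ i : Fin m, (f i : ℕ)) = r ∧ (∑ i : Fin m, ((i : ℕ) + 1) * (f i : ℕ)) = m then
      (r.factorial : ℚ) / (∏ i : Fin m, ((f i : ℕ).factorial : ℚ)) * ∏ i : Fin m, t ((i : ℕ) + 1) ^ (f i : ℕ)
    else 0

/-- normalized potential polynomial  P_p^{(lam)}(1!t₁,2!t₂,…)/p! -/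
def potential (lam p : ℕ) (t : ℕ → ℚ) : ℚ :=
  ∑ r ∈ Finset.range (p + 1), (Nat.choose lam r : ℚ) * bellNorm p r t

/-- Split a word at its down-steps. -/
def sp : List Step → List (List Step)
  | [] => [[]]
  | Step.d :: l => [] :: sp l
  | Step.u :: l => (sp l).modifyHead (Step.u :: ·)
  | Step.h :: l => (sp l).modifyHead (Step.h :: ·)

/-- The counterpart of nonnegativity for lists of blocks. -/
def GoodB (bs : List (List Step)) : Prop :=
  ∀ l < bs.length, l ≤ ((bs.take l).map (List.count Step.u)).sum

theorem sp_head (w : List Step) : ∃ b bs, sp w = b :: bs ∧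
    (b.head? = some Step.u ↔ w.head? = some Step.u) := by
  induction w with
  | nil => exact ⟨[], [], rfl, by simp⟩
  | cons s l ih =>
    obtain ⟨b, bs, h, -⟩ := ih
    cases s <;> simp [sp, h]

theorem sp_length (w : List Step) : (sp w).length = w.count Step.d + 1 := by
  induction w with
  | nil => rfl
  | cons s l ih => cases s <;> simp [sp, ih]

theorem sp_count_u (w : List Step) : (sp w).flatten.count Step.u = w.count Step.u := by
  induction w with
  | nil => rfl
  | cons s l ih =>
    obtain ⟨b, bs, h, -⟩ := sp_head l
    cases s <;> simp_all [sp] <;> omega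

theorem sp_count_h (w : List Step) : (sp w).flatten.count Step.h = w.count Step.h := by
  induction w with
  | nil => rfl
  | cons s l ih =>
    obtain ⟨b, bs, h, -⟩ := sp_head l
    cases s <;> simp_all [sp] <;> omega

theorem sp_no_d (w : List Step) : ∀ b ∈ sp w, Step.d ∉ b := by
  induction w with
  | nil => simp [sp]
  | cons s l ih =>
    obtain ⟨b, bs, h, -⟩ := sp_head l
    cases s <;> simp_all [sp]

theorem sp_inj (w w' : List Step) (hw : sp w = sp w') : w = w' := by
  induction w generalizing w' with
  | nil =>
    cases w' with
    | nil => rfl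
    | cons s l =>
      obtain ⟨b, bs, h, -⟩ := sp_head l
      cases s <;> simp_all [sp]
  | cons s l ih =>
    obtain ⟨b, bs, h, -⟩ := sp_head l
    cases w' with
    | nil => cases s <;> simp_all [sp]
    | cons s' l' =>
      obtain ⟨b', bs', h', -⟩ := sp_head l'
      have := ih l'
      cases s <;> cases s' <;> simp_all [sp]

theorem sp_surj (bs : List (List Step)) (h0 : bs ≠ []) (hd : ∀ b ∈ bs, Step.d ∉ b) :
    ∃ w, sp w = bs := by
  induction bs with
  | nil => exact absurd rfl h0
  | cons b bs ih =>
    induction b with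
    | nil =>
      by_cases hb : bs = []
      · exact ⟨[], by simp [sp, hb]⟩
      · obtain ⟨w, hw⟩ := ih hb (fun b hb => hd b (by simp [hb]))
        exact ⟨Step.d :: w, by simp [sp, hw]⟩
    | cons s b ihb =>
      obtain ⟨w, hw⟩ := ihb (by simp) (by
        intro c hc
        rcases List.mem_cons.1 hc with rfl | hc
        · have := hd (s :: c) (by simp)
          simp_all
        · exact hd c (by simp [hc]))
      refine ⟨s :: w, ?_⟩
      have := hd (s :: b) (by simp)
      cases s <;> simp_all [sp]

theorem uRuns_d (l : List Step) : uRuns (Step.d :: l) = uRuns l := by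
  simp [uRuns, runs]

theorem uRuns_h (l : List Step) : uRuns (Step.h :: l) = uRuns l := by
  simp [uRuns, runs]

theorem uRuns_ne (l : List Step) : uRuns (Step.u :: l) ≠ [] := by
  unfold uRuns
  rw [runs]
  dsimp only
  repeat' split
  all_goals simp

theorem uRuns_u (l : List Step) : uRuns (Step.u :: l) =
    if l.head? = some Step.u then (uRuns l).modifyHead (1 + ·) else 1 :: uRuns l := by
  cases l with
  | nil => rfl
  | cons s l =>
    cases s with
    | u =>
      have := uRuns_ne l
      obtain ⟨a, r, h⟩ := List.exists_cons_of_ne_nil this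
      simp only [List.head?_cons, if_true, h, List.modifyHead_cons]
      unfold uRuns at h ⊢
      rw [runs, h]
    | d => simp [uRuns, runs]
    | h => simp [uRuns, runs]

theorem sp_uRuns (w : List Step) : (sp w).flatMap uRuns = uRuns w := by
  induction w with
  | nil => rfl
  | cons s l ih =>
    obtain ⟨b, bs, h, hh⟩ := sp_head l
    rw [h] at ih
    cases s with
    | d => simp [sp, h, uRuns_d, ← ih]; rfl
    | h => simp [sp, h, uRuns_h, ← ih]
    | u =>
      simp only [sp, h, uRuns_u, List.modifyHead_cons, List.flatMap_cons, hh, ← ih]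
      split_ifs with hu
      · rw [← hh] at hu
        obtain ⟨b', rfl⟩ : ∃ b', b = Step.u :: b' := by
          cases b <;> simp_all
        obtain ⟨a, r, h⟩ := List.exists_cons_of_ne_nil (uRuns_ne b')
        simp [h]
      · simp

theorem sp_good_aux (w : List Step) : ∀ c : ℕ,
    (∀ i, (w.take i).count Step.d ≤ c + (w.take i).count Step.u) ↔
    ∀ l < (sp w).length, l ≤ c + (((sp w).take l).map (List.count Step.u)).sum := by
  induction w with
  | nil => intro c; simp [sp]
  | cons s l ih =>
    intro c
    obtain ⟨b, bs, h, -⟩ := sp_head l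
    have e1 : ∀ p : ℕ → Prop, (∀ i, p i) ↔ p 0 ∧ ∀ i, p (i + 1) := fun p =>
      ⟨fun h => ⟨h 0, fun i => h _⟩, fun h i => by
        cases i
        · exact h.1
        · exact h.2 _⟩
    rw [e1, e1 (fun i => i < (sp (s :: l)).length → _)]
    cases s with
    | u =>
      have := ih (c + 1)
      rw [e1 (fun i => i < (sp l).length → _)] at this
      simp [sp, h, add_assoc, add_comm, add_left_comm] at this ⊢
      exact this
    | h =>
      have := ih c
      rw [e1 (fun i => i < (sp l).length → _)] at this
      simp [sp, h] at this ⊢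
      exact this
    | d =>
      cases c with
      | zero =>
        refine iff_of_false (fun h => ?_) (fun h => ?_)
        · simpa using h.2 0
        · simpa [sp, sp_length] using h.2 0
      | succ c =>
        have := ih c
        simp [sp, add_right_comm c 1] at this ⊢
        exact this

theorem sp_good (w : List Step) : GoodB (sp w) ↔ IsNonneg w := by
  have := sp_good_aux w 0
  simp only [zero_add] at this
  exact this.symm

/-- Cycle lemma. -/
theorem cycle_S (N : ℕ) (hN : 0 < N) (S : ℕ → ℤ) (hS : ∀ i ≤ N, S (i + N) = S i - 1) :
    (∃ i < N, ∀ l < N, S i ≤ S (i + l)) ∧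
    ∀ i < N, (∀ l < N, S 0 ≤ S l) → (∀ l < N, S i ≤ S (i + l)) → i = 0 := by
  constructor
  · obtain ⟨i0, hi0, hmin⟩ := Finset.exists_min_image (Finset.range N) S ⟨0, by simpa using hN⟩
    classical
    have hex : ∃ i, i < N ∧ ∀ l < N, S i ≤ S l :=
      ⟨i0, by simpa using hi0, fun l hl => hmin l (by simpa using hl)⟩
    obtain ⟨h1, h2⟩ := Nat.find_spec hex
    refine ⟨Nat.find hex, h1, fun l hl => ?_⟩
    set i := Nat.find hex with hi
    by_cases hil : i + l < N
    · exact h2 _ hil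
    · obtain ⟨t, ht⟩ : ∃ t, i + l = t + N := ⟨i + l - N, by omega⟩
      rw [ht, hS t (by omega)]
      have hlt : t < i := by omega
      have := Nat.find_min hex hlt
      push Not at this
      obtain ⟨q, hq, hq2⟩ := this (by omega)
      have := h2 q hq
      omega
  · intro i hi h0 h
    by_contra hne
    have a := h0 i hi
    have b := h (N - i) (by omega)
    have c := hS 0 (by omega)
    rw [show i + (N - i) = 0 + N by omega] at b
    omega

/-- Prefix sums of the doubled list of blocks. -/
def SS (bs : List (List Step)) (i : ℕ) : ℤ :=
  ((((bs ++ bs).take i).map (List.count Step.u)).sum : ℤ) - i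

theorem good_rot (bs : List (List Step)) (i : ℕ) (hi : i ≤ bs.length) :
    GoodB (bs.rotate i) ↔ ∀ l < bs.length, SS bs i ≤ SS bs (i + l) := by
  unfold GoodB SS
  rw [List.length_rotate]
  refine forall₂_congr fun l hl => ?_
  have : (bs.rotate i).take l = ((bs ++ bs).drop i).take l := by
    rw [List.rotate_eq_drop_append_take hi, List.drop_append_of_le_length hi, List.take_append,
      List.take_append, List.take_take]
    congr 2
    simp
    omega
  rw [this, List.take_add, List.map_append, List.sum_append, Nat.cast_add, Nat.cast_add]
  omega

theorem cycle_B (m : ℕ) (bs : List (List Step)) (hl : bs.length = m + 1)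
    (hu : bs.flatten.count Step.u = m) :
    (∃ i < m + 1, GoodB (bs.rotate i)) ∧
    ∀ i < m + 1, GoodB bs → GoodB (bs.rotate i) → i = 0 := by
  have hS : ∀ i ≤ m + 1, SS bs (i + (m + 1)) = SS bs i - 1 := by
    intro i hi
    unfold SS
    rw [← hl] at hi ⊢
    rw [add_comm i, List.take_length_add_append, List.take_append_of_le_length hi,
      List.map_append, List.sum_append, ← List.count_flatten, hu]
    push_cast
    rw [hl]
    push_cast
    ring
  obtain ⟨⟨i, hi, h1⟩, h2⟩ := cycle_S (m + 1) (by omega) (SS bs) hS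
  refine ⟨⟨i, hi, (good_rot bs i (by omega)).2 (by rwa [hl])⟩, fun i hi hg hgi => ?_⟩
  have a := (good_rot bs 0 (by omega)).1 (by simpa using hg)
  have b := (good_rot bs i (by omega)).1 hgi
  rw [hl] at a b
  exact h2 i hi (by simpa using a) b

/-- Block lists of the given type. -/
def TT (m j : ℕ) (rv : ℕ → ℕ) : Set (List (List Step)) :=
  {bs | bs.length = m + 1 ∧ (∀ b ∈ bs, Step.d ∉ b) ∧ bs.flatten.count Step.u = m ∧
    bs.flatten.count Step.h = j ∧ ∀ i ∈ Finset.Icc 1 m, (bs.flatMap uRuns).count i = rv i}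

theorem TT_rot (m j : ℕ) (rv : ℕ → ℕ) (bs : List (List Step)) (h : bs ∈ TT m j rv) (c : ℕ) :
    bs.rotate c ∈ TT m j rv := by
  obtain ⟨h1, h2, h3, h4, h5⟩ := h
  have hp : (bs.rotate c).Perm bs := List.rotate_perm bs c
  refine ⟨by simpa using h1, fun b hb => h2 b (hp.mem_iff.1 hb), ?_, ?_, fun i hi => ?_⟩
  · rw [hp.flatten.count_eq, h3]
  · rw [hp.flatten.count_eq, h4]
  · rw [(hp.flatMap_right _).count_eq, h5 i hi]

theorem TT_card (m j : ℕ) (rv : ℕ → ℕ) :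
    (TT m j rv).ncard = (m + 1) * ({bs ∈ TT m j rv | GoodB bs}).ncard := by
  have h1 : ((Set.Iio (m + 1)) ×ˢ {bs ∈ TT m j rv | GoodB bs}).ncard =
      (m + 1) * ({bs ∈ TT m j rv | GoodB bs}).ncard := by
    rw [Set.ncard_prod]
    congr 1
    rw [← Finset.coe_Iio, Set.ncard_coe_finset]
    simp
  rw [← h1]
  symm
  have key : ∀ c c' P P', c ≤ c' → c' < m + 1 → P ∈ TT m j rv → P' ∈ TT m j rv → GoodB P →
      GoodB P' → P.rotate c = P'.rotate c' → c = c' ∧ P = P' := by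
    intro c c' P P' hc hc' hP hP' gP gP' he
    have e : P.rotate c = (P'.rotate (c' - c)).rotate c := by
      rw [List.rotate_rotate, he]; congr 1; omega
    have e2 := List.rotate_injective c e
    have := (cycle_B m P' hP'.1 hP'.2.2.1).2 (c' - c) (by omega) gP' (e2 ▸ gP)
    rw [this] at e2
    exact ⟨by omega, by simpa using e2⟩
  refine Set.ncard_congr (fun p _ => p.2.rotate p.1) ?_ ?_ ?_
  · rintro ⟨c, P⟩ ⟨hc, hP, g⟩
    exact TT_rot m j rv P hP c
  · rintro ⟨c, P⟩ ⟨c', P'⟩ ⟨hc, hP, g⟩ ⟨hc', hP', g'⟩ he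
    simp only [Set.mem_Iio] at hc hc' he hP hP' g g'
    rcases le_total c c' with h | h
    · obtain ⟨a, b⟩ := key c c' P P' h hc' hP hP' g g' he
      rw [a, b]
    · obtain ⟨a, b⟩ := key c' c P' P h hc hP' hP g' g he.symm
      rw [a, b]
  · intro Q hQ
    obtain ⟨i, hi, g⟩ := (cycle_B m Q hQ.1 hQ.2.2.1).1
    refine ⟨((m + 1 - i) % (m + 1), Q.rotate i), ⟨Nat.mod_lt _ (by omega), TT_rot m j rv Q hQ i, g⟩, ?_⟩
    have hl : (Q.rotate i).length = m + 1 := by simpa using hQ.1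
    show (Q.rotate i).rotate ((m + 1 - i) % (m + 1)) = Q
    conv_lhs => rw [← hl, List.rotate_mod, hl]
    rw [List.rotate_rotate, show i + (m + 1 - i) = Q.length by rw [hQ.1]; omega,
      List.rotate_length]

theorem sp_mem (m j : ℕ) (rv : ℕ → ℕ) (w : List Step) : sp w ∈ TT m j rv ↔
    (w.count Step.u = m ∧ w.count Step.d = m ∧
        w.count Step.h = j ∧ ∀ i ∈ Finset.Icc 1 m, alpha i w = rv i) := by
  unfold TT alpha
  simp only [Set.mem_setOf_eq, sp_length, sp_count_u, sp_count_h, sp_uRuns]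
  have := sp_no_d w
  constructor
  · rintro ⟨a, b, c, d, e⟩; exact ⟨c, by omega, d, e⟩
  · rintro ⟨c, a, d, e⟩; exact ⟨by omega, this, c, d, e⟩

theorem stmt11 (k j m : ℕ) (hm : 1 ≤ m) (rv : ℕ → ℕ)
    (hsum : ∑ i ∈ Finset.Icc 1 m, i * rv i = m) :
    Set.ncard {w : List Step | w.count Step.u = m ∧ w.count Step.d = m ∧
        w.count Step.h = j ∧ ∀ i ∈ Finset.Icc 1 m, alpha i w = rv i} =
      (m + 1) * Set.ncard {w ∈ pathSet m j | ∀ i ∈ Finset.Icc 1 m, alpha i w = rv i} := by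
  have hsurj : ∀ bs ∈ TT m j rv, ∃ w, sp w = bs := fun bs hbs =>
    sp_surj bs (by rintro rfl; simpa using hbs.1) hbs.2.1
  have e1 : Set.ncard {w : List Step | w.count Step.u = m ∧ w.count Step.d = m ∧
        w.count Step.h = j ∧ ∀ i ∈ Finset.Icc 1 m, alpha i w = rv i} = (TT m j rv).ncard := by
    refine Set.ncard_congr (fun w _ => sp w) (fun w hw => (sp_mem m j rv w).2 hw)
      (fun w w' _ _ h => sp_inj w w' h) (fun bs hbs => ?_)
    obtain ⟨w, rfl⟩ := hsurj bs hbs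
    exact ⟨w, (sp_mem m j rv w).1 hbs, rfl⟩
  have e2 : Set.ncard {w ∈ pathSet m j | ∀ i ∈ Finset.Icc 1 m, alpha i w = rv i} =
      ({bs ∈ TT m j rv | GoodB bs}).ncard := by
    refine Set.ncard_congr (fun w _ => sp w) ?_
      (fun w w' _ _ h => sp_inj w w' h) ?_
    · rintro w ⟨⟨a, b, c, d⟩, e⟩
      exact ⟨(sp_mem m j rv w).2 ⟨a, b, c, e⟩, (sp_good w).2 d⟩
    · rintro bs ⟨hbs, g⟩
      obtain ⟨w, rfl⟩ := hsurj bs hbs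
      obtain ⟨a, b, c, e⟩ := (sp_mem m j rv w).1 hbs
      exact ⟨w, ⟨⟨a, b, c, (sp_good w).1 g⟩, e⟩, rfl⟩
  rw [e1, e2, TT_card]
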